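/- The infinite series identity 512√3/81 = Σ_{k=0}^{∞} (1/64)^k · [(-1/6)_k (7/6)_k (3/2)_k] / [(1)_k (4/3)_k (5/3)_k] · (14k + 11) holds, where the sum is over natural numbers k and all quantities are real numbers. -/

import Mathlib

noncomputable def risingFactorial (a : ℝ) (k : ℕ) : ℝ := ∏ i ∈ Finset.range k, (a + i)

/-!
Each summand collects three consecutive terms of a binomial series. Put
`b n = (-1/2)_n / n! / 4 ^ n`. By the triplication formula for `(-1/2)_{3k}` and `(3k)!`, the
hypergeometric term is a rational multiple of `b (3k)`, and the factor `14 k + 11` turns it into the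
sum of `128/27 · (2 n + 3) b n` over `n = 3k, 3k + 1, 3k + 2`. The ungrouped series is evaluated
by `∑ (a)_n / n! x ^ n = (1 - x) ^ (-a)` and the image of this identity under `x d/dx`.
-/

open Finset
open scoped Nat

section RisingFactorial

lemma risingFactorial_succ (a : ℝ) (k : ℕ) :
    risingFactorial a (k + 1) = risingFactorial a k * (a + k) :=
  prod_range_succ _ _

lemma risingFactorial_succ_left (a : ℝ) (k : ℕ) :
    risingFactorial a (k + 1) = a * risingFactorial (a + 1) k := by
  simp [risingFactorial, prod_range_succ', mul_comm, add_assoc, add_comm (1 : ℝ)]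

lemma risingFactorial_add_one {a : ℝ} (ha : a ≠ 0) (k : ℕ) :
    risingFactorial (a + 1) k = risingFactorial a k * ((a + k) / a) := by
  rw [← mul_div_assoc, eq_div_iff ha, mul_comm, ← risingFactorial_succ_left, risingFactorial_succ]

lemma risingFactorial_pos {a : ℝ} (ha : 0 < a) (k : ℕ) : 0 < risingFactorial a k :=
  prod_pos fun _ _ ↦ by positivity

lemma risingFactorial_eq_eval_ascPochhammer (a : ℝ) (k : ℕ) :
    risingFactorial a k = (ascPochhammer ℝ k).eval a := by
  induction k with
  | zero => simp [risingFactorial]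
  | succ k ih => rw [risingFactorial_succ, ih, ascPochhammer_succ_eval]

lemma risingFactorial_one (k : ℕ) : risingFactorial 1 k = k ! := by
  rw [risingFactorial_eq_eval_ascPochhammer, ascPochhammer_eval_one]

lemma risingFactorial_nat_mul (a : ℝ) {m : ℕ} (hm : m ≠ 0) (k : ℕ) :
    risingFactorial a (m * k) =
      m ^ (m * k) * ∏ j ∈ range m, risingFactorial ((a + j) / m) k := by
  have hm' : (m : ℝ) ≠ 0 := Nat.cast_ne_zero.mpr hm
  induction k with
  | zero => simp [risingFactorial]
  | succ k ih =>
    have block : ∏ j ∈ range m, (a + ((m * k + j : ℕ) : ℝ)) =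
        m ^ m * ∏ j ∈ range m, ((a + j) / m + k) := by
      rw [← card_range m, ← prod_const, card_range, ← prod_mul_distrib]
      refine prod_congr rfl fun j _ ↦ ?_
      push_cast
      field_simp
      ring
    calc risingFactorial a (m * (k + 1))
        = risingFactorial a (m * k) * ∏ j ∈ range m, (a + ((m * k + j : ℕ) : ℝ)) :=
          prod_range_add _ _ _
      _ = m ^ (m * (k + 1)) * ∏ j ∈ range m, risingFactorial ((a + j) / m) (k + 1) := by
          simp only [risingFactorial_succ, prod_mul_distrib, ih, block]
          ring

lemma risingFactorial_three_mul (a : ℝ) (k : ℕ) :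
    risingFactorial a (3 * k) = 27 ^ k * (risingFactorial (a / 3) k *
      risingFactorial ((a + 1) / 3) k * risingFactorial ((a + 2) / 3) k) := by
  norm_num [risingFactorial_nat_mul a three_ne_zero, prod_range_succ, pow_mul]

end RisingFactorial

section BinomialSeries

/-- The `n`-th term `(a)_n / n! * x ^ n` of the binomial series of `(1 - x) ^ (-a)`. -/
noncomputable def binomialTerm (a x : ℝ) (n : ℕ) : ℝ := risingFactorial a n / n ! * x ^ n

lemma binomialTerm_succ (a x : ℝ) (n : ℕ) :
    binomialTerm a x (n + 1) = binomialTerm a x n * ((a + n) / (n + 1) * x) := by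
  simp only [binomialTerm, risingFactorial_succ, Nat.factorial_succ, pow_succ]
  push_cast
  field_simp

lemma add_one_mul_binomialTerm_succ (a x : ℝ) (n : ℕ) :
    (n + 1) * binomialTerm a x (n + 1) = a * x * binomialTerm (a + 1) x n := by
  simp only [binomialTerm, risingFactorial_succ_left, Nat.factorial_succ, pow_succ]
  push_cast
  field_simp

lemma choose_add_sub_one_eq_risingFactorial_div (a : ℝ) (n : ℕ) :
    Ring.choose (a + n - 1) n = risingFactorial a n / n ! := by
  rw [eq_div_iff (by positivity), ← Ring.multichoose_eq, mul_comm, ← nsmul_eq_mul,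
    Ring.factorial_nsmul_multichoose_eq_ascPochhammer, Polynomial.ascPochhammer_smeval_eq_eval,
    risingFactorial_eq_eval_ascPochhammer]

variable {x : ℝ}

lemma hasSum_binomialTerm (a : ℝ) (hx : |x| < 1) :
    HasSum (binomialTerm a x) ((1 - x) ^ (-a)) := by
  have hx_ball : x ∈ Metric.eball (0 : ℝ) 1 := by
    simpa [enorm_eq_nnnorm, ← NNReal.coe_lt_one] using hx
  have hsum := (Real.one_div_one_sub_rpow_hasFPowerSeriesOnBall_zero a).hasSum hx_ball
  have hx_pos : 0 < 1 - x := by linarith [le_abs_self x]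
  unfold binomialTerm
  simpa [choose_add_sub_one_eq_risingFactorial_div, Real.rpow_neg hx_pos.le, mul_comm] using hsum

lemma hasSum_nat_mul_binomialTerm (a : ℝ) (hx : |x| < 1) :
    HasSum (fun n : ℕ ↦ n * binomialTerm a x n) (a * x * (1 - x) ^ (-(a + 1))) := by
  rw [← hasSum_nat_add_iff' 1]
  simpa [add_one_mul_binomialTerm_succ] using (hasSum_binomialTerm (a + 1) hx).mul_left (a * x)

lemma hasSum_affine_mul_binomialTerm (a c d : ℝ) (hx : |x| < 1) :
    HasSum (fun n : ℕ ↦ (c * n + d) * binomialTerm a x n)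
      ((c * (a * x / (1 - x)) + d) * (1 - x) ^ (-a)) := by
  have hx_pos : 0 < 1 - x := by linarith [le_abs_self x]
  have value : (c * (a * x / (1 - x)) + d) * (1 - x) ^ (-a) =
      c * (a * x * (1 - x) ^ (-(a + 1))) + d * (1 - x) ^ (-a) := by
    rw [neg_add', Real.rpow_sub_one hx_pos.ne']
    ring
  simpa only [value, add_mul, mul_assoc] using
    ((hasSum_nat_mul_binomialTerm a hx).mul_left c).add ((hasSum_binomialTerm a hx).mul_left d)

end BinomialSeries

lemma hasSum_sum_range_block {M : Type*} [AddCommMonoid M] [TopologicalSpace M] [ContinuousAdd M]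
    [RegularSpace M] {f : ℕ → M} {s : M} (hf : HasSum f s) {m : ℕ} (hm : m ≠ 0) :
    HasSum (fun k ↦ ∑ j ∈ range m, f (m * k + j)) s := by
  have : NeZero m := ⟨hm⟩
  refine ((Nat.divModEquiv m).symm.hasSum_iff.mpr hf).prod_fiberwise fun k ↦ ?_
  simpa [← Fin.sum_univ_eq_sum_range, mul_comm m] using
    hasSum_fintype fun j : Fin m ↦ f (k * m + j)

section HypergeometricTerm

/-- The term of the hypergeometric series `₃F₂(-1/6, 7/6, 3/2; 4/3, 5/3; 1/64)`, in which `(1)_k`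
plays the role of `k!`. -/
noncomputable def hypergeometricTerm (k : ℕ) : ℝ :=
  (1/64 : ℝ) ^ k * (risingFactorial (-1/6) k * risingFactorial (7/6) k * risingFactorial (3/2) k) /
    (risingFactorial 1 k * risingFactorial (4/3) k * risingFactorial (5/3) k)

lemma hypergeometricTerm_eq_mul_binomialTerm (k : ℕ) :
    hypergeometricTerm k = 2 * (6 * k + 1) * (2 * k + 1) / ((3 * k + 1) * (3 * k + 2)) *
      binomialTerm (-1/2) (1/4) (3 * k) := by
  have numerator : risingFactorial (-1/2) (3 * k) = 27 ^ k * (risingFactorial (-1/6) k *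
      risingFactorial (1/6) k * risingFactorial (1/2) k) := by
    rw [risingFactorial_three_mul]
    norm_num
  have denominator : ((3 * k)! : ℝ) = 27 ^ k * (risingFactorial (1/3) k *
      risingFactorial (2/3) k * risingFactorial 1 k) := by
    rw [← risingFactorial_one, risingFactorial_three_mul]
    norm_num
  have risingFactorial_one_third_pos := risingFactorial_pos (a := 1/3) (by norm_num) k
  have risingFactorial_two_thirds_pos := risingFactorial_pos (a := 2/3) (by norm_num) k
  have risingFactorial_one_pos := risingFactorial_pos one_pos k
  rw [hypergeometricTerm, binomialTerm, numerator, denominator, pow_mul,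
    show (7/6 : ℝ) = 1/6 + 1 by norm_num, risingFactorial_add_one (a := 1/6) (by norm_num),
    show (3/2 : ℝ) = 1/2 + 1 by norm_num, risingFactorial_add_one (a := 1/2) (by norm_num),
    show (4/3 : ℝ) = 1/3 + 1 by norm_num, risingFactorial_add_one (a := 1/3) (by norm_num),
    show (5/3 : ℝ) = 2/3 + 1 by norm_num, risingFactorial_add_one (a := 2/3) (by norm_num),
    show (1/4 : ℝ) ^ 3 = 1/64 by norm_num]
  field_simp
  ring

lemma hypergeometricTerm_mul_eq_sum_binomialTerm (k : ℕ) :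
    hypergeometricTerm k * (14 * k + 11) = 128 / 27 * ∑ j ∈ range 3,
      (2 * ((3 * k + j : ℕ) : ℝ) + 3) * binomialTerm (-1/2) (1/4) (3 * k + j) := by
  rw [hypergeometricTerm_eq_mul_binomialTerm]
  simp only [sum_range_succ, sum_range_zero, add_zero, zero_add, binomialTerm_succ]
  push_cast
  field_simp
  ring

end HypergeometricTerm

theorem stmt_7 :
    512 * Real.sqrt 3 / 81 =
      ∑' k : ℕ, (1/64 : ℝ) ^ k * (risingFactorial (-1/6) k * risingFactorial (7/6) k * risingFactorial (3/2) k) /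
        (risingFactorial (1) k * risingFactorial (4/3) k * risingFactorial (5/3) k) * (14 * (k:ℝ) + 11) := by
  have ungrouped : HasSum (fun n : ℕ ↦ (2 * n + 3) * binomialTerm (-1/2) (1/4) n)
      (4 * √3 / 3) := by
    have sqrt_value : (1 - 1/4 : ℝ) ^ (-(-1/2) : ℝ) = √3 / 2 := by
      rw [show (1 - 1/4 : ℝ) = 3 / 2 ^ 2 by norm_num, show (-(-1/2) : ℝ) = 1 / 2 by norm_num,
        ← Real.sqrt_eq_rpow, Real.sqrt_div zero_le_three, Real.sqrt_sq zero_le_two]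
    convert hasSum_affine_mul_binomialTerm (-1/2) 2 3 (x := 1/4) (by norm_num [abs_lt]) using 1
    rw [sqrt_value]
    ring
  have grouped := (hasSum_sum_range_block ungrouped three_ne_zero).mul_left (128 / 27)
  simp only [← hypergeometricTerm_mul_eq_sum_binomialTerm] at grouped
  calc 512 * √3 / 81 = 128 / 27 * (4 * √3 / 3) := by ring
    _ = ∑' k : ℕ, hypergeometricTerm k * (14 * k + 11) := grouped.tsum_eq.symm
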